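/- arXiv:2102.02778 — 2 statements merged into one kernel-verified Lean document; each statement's English description precedes it below -/
import Mathlib

section
/- Let X be an infinite-dimensional Banach space that contains uniformly complemented (ℓ₂ⁿ)_{n=1}^∞, i.e. there are a constant C ≥ 1 and a sequence (F_n)_{n=1}^∞ of subspaces of X such that, for each n, F_n is C-isomorphic to ℓ₂ⁿ and C-complemented in X. Then for every k ≥ 2 the space P(ᵏX) of k-homogeneous polynomials on X is not complemented in Lip₀(B_X). -/
open Metric Set Real

noncomputable section

/-- The closed unit ball of a normed space, as a pointed metric space. -/
def UBall (X : Type*) [NormedAddCommGroup X] : Set X := Metric.closedBall (0 : X) 1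

/-- The base point of the unit ball. -/
def zeroB (X : Type*) [NormedAddCommGroup X] : ↥(UBall X) :=
  ⟨0, Metric.mem_closedBall_self zero_le_one⟩

/-- `Lip₀(B_X)`: real-valued Lipschitz functions on the closed unit ball vanishing at `0`. -/
def Lip0B (X : Type*) [NormedAddCommGroup X] : Set (↥(UBall X) → ℝ) :=
  {f | (∃ K : NNReal, LipschitzWith K f) ∧ f (zeroB X) = 0}

/-- The image of the space `P(ᵏX)` of `k`-homogeneous polynomials on `X` inside the
functions on the unit ball, via the restriction embedding `P ↦ P↾_{B_X}`. -/
def PhomB (k : ℕ) (X : Type*) [NormedAddCommGroup X] [NormedSpace ℝ X] :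
    Set (↥(UBall X) → ℝ) :=
  {f | ∃ M : ContinuousMultilinearMap ℝ (fun _ : Fin k => X) ℝ,
    ∀ x : ↥(UBall X), f x = M (fun _ => (x : X))}

/-- `C₀¹(B_E)`: functions on the closed unit ball that are continuous on the closed ball,
continuously differentiable on the open ball with uniformly continuous derivative,
and vanish at `0`. -/
def C01B (E : Type*) [NormedAddCommGroup E] [NormedSpace ℝ E] :
    Set (↥(UBall E) → ℝ) :=
  {f | ∃ g : E → ℝ,
    (∀ x : ↥(UBall E), f x = g x) ∧
    ContinuousOn g (UBall E) ∧ g 0 = 0 ∧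
    ∃ g' : E → (E →L[ℝ] ℝ),
      (∀ x ∈ Metric.ball (0 : E) 1, HasFDerivAt g (g' x) x) ∧
      UniformContinuousOn g' (Metric.ball (0 : E) 1)}

/-!
Fix Euclidean coordinates `x₁, …, xₙ` on `X` with dual vectors `e₁, …, eₙ`, normalised with
`s ~ n^(-1/2)` so that every point `y_ε = s ∑ εⱼ eⱼ` lies in the unit ball. For signs `ε`, the
product `∏ (1 + i εⱼ xⱼ)` has modulus at most `exp (‖x‖² / 2)`: its coefficients are imaginary, so
its Lipschitz constant on the ball is only `O(√n)`. A difference of order `k` along rays removes its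
components of degree below `k`, which gives real test functions `f_ε` with the same bound.

Let `Q` be a projection of `Lip₀(B_X)` onto the `k`-homogeneous polynomials, and expand
`Q f_ε (y_η)` in Walsh functions of both `ε` and `η`. The diagonal coefficients at `S` vanish for
`|S| < k` because those of `f_ε` do, and for `|S| > k` because `Q f_ε` has degree `k`; for `|S| = k`
the coefficient of `f_ε` is a multiple of the monomial `∏_{j ∈ S} xⱼ`, which `Q` fixes. Hence the
average of `Q f_ε (y_ε)` is `n (n - 1) ⋯ (n - k + 1) s^k`, of order `n^(k/2)`, while every single
value is `O(√n)`. This is impossible when `k ≥ 2`.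
-/

section Walsh

variable {ι A B R : Type*} [AddCommGroup A] [AddCommGroup B] [CommRing R]

/-- The Walsh function of `S` on the cube `{±1}^ι`, whose points are modelled by `ι → ℤˣ` so that
signs act on every additive group. -/
def walsh (S : Finset ι) (ε : ι → ℤˣ) : ℤˣ := ∏ j ∈ S, ε j

lemma walsh_smul_walsh_smul (S : Finset ι) (ε : ι → ℤˣ) (a : A) :
    walsh S ε • walsh S ε • a = a := by
  rw [smul_smul, Int.units_mul_self, one_smul]

lemma prod_units_smul {κ : Type*} (S : Finset κ) (u : κ → ℤˣ) (z : κ → R) :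
    ∏ j ∈ S, u j • z j = (∏ j ∈ S, u j) • ∏ j ∈ S, z j := by
  simp only [Units.smul_def, zsmul_eq_mul, Finset.prod_mul_distrib, Units.coe_prod, Int.cast_prod]

lemma walsh_update_neg [DecidableEq ι] {S : Finset ι} {j : ι} (hj : j ∈ S) (ε : ι → ℤˣ) :
    walsh S (Function.update ε j (-ε j)) = -walsh S ε := by
  rw [walsh, Finset.prod_update_of_mem hj, neg_mul, walsh,
    Finset.prod_eq_mul_prod_sdiff_singleton_of_mem hj]

variable [Fintype ι]

lemma sum_walsh_mul_walsh (ε η : ι → ℤˣ) :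
    ∑ S : Finset ι, ((walsh S ε * walsh S η : ℤˣ) : ℤ) =
      if ε = η then 2 ^ Fintype.card ι else 0 := by
  have expand : ∑ S : Finset ι, ((walsh S ε * walsh S η : ℤˣ) : ℤ) =
      ∏ j, (1 + ((ε j * η j : ℤˣ) : ℤ)) := by
    simp only [walsh, ← Finset.prod_mul_distrib, Units.coe_prod, Finset.prod_one_add,
      Finset.powerset_univ]
  rw [expand]
  split_ifs with h
  · simp [h, Int.units_mul_self]
  · obtain ⟨j, hj⟩ := Function.ne_iff.mp h
    refine Finset.prod_eq_zero (Finset.mem_univ j) ?_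
    rw [Int.units_ne_iff_eq_neg.mp hj]
    simp

lemma map_sum_units_smul {κ : Type*} [Fintype κ] [DecidableEq κ]
    (M : MultilinearMap ℤ (fun _ : κ => A) B) (ε : ι → ℤˣ) (e : ι → A) :
    M (fun _ => ∑ j, ε j • e j) = ∑ i : κ → ι, (∏ l, ε (i l)) • M fun l => e (i l) := by
  rw [M.map_sum]
  refine Finset.sum_congr rfl fun i _ => ?_
  rw [Units.smul_def, Units.coe_prod]
  exact M.map_smul_univ (fun l => (ε (i l) : ℤ)) fun l => e (i l)

variable [DecidableEq ι]

/-- The Walsh coefficient at `S` of a function on the cube with values in an additive group,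
without the normalising factor `2⁻ⁿ`. -/
def walshCoeff (S : Finset ι) (G : (ι → ℤˣ) → A) : A := ∑ ε, walsh S ε • G ε

lemma map_walshCoeff (L : A →+ B) (S : Finset ι) (G : (ι → ℤˣ) → A) :
    L (walshCoeff S G) = walshCoeff S fun ε => L (G ε) := by
  simp only [walshCoeff, map_sum, Units.smul_def, map_zsmul]

lemma walshCoeff_apply {κ : Type*} (S : Finset ι) (G : (ι → ℤˣ) → κ → A) (x : κ) :
    walshCoeff S G x = walshCoeff S fun ε => G ε x :=
  map_walshCoeff (Pi.evalAddMonoidHom (fun _ => A) x) S G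

lemma walshCoeff_comm (S T : Finset ι) (G : (ι → ℤˣ) → (ι → ℤˣ) → A) :
    walshCoeff S (fun η => walshCoeff T fun ε => G ε η) =
      walshCoeff T fun ε => walshCoeff S fun η => G ε η := by
  simp only [walshCoeff, Finset.smul_sum]
  rw [Finset.sum_comm]
  simp only [smul_comm (walsh S _)]

lemma walshCoeff_walsh_smul (S : Finset ι) (a : A) :
    walshCoeff S (fun ε => walsh S ε • a) = 2 ^ Fintype.card ι • a := by
  simp only [walshCoeff, walsh_smul_walsh_smul, Finset.sum_const, Finset.card_univ,
    Fintype.card_fun, Fintype.card_units_int]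

lemma walshCoeff_eq_zero_of_update_neg {S : Finset ι} {j : ι} (hj : j ∈ S) {G : (ι → ℤˣ) → A}
    (hG : ∀ ε, G (Function.update ε j (-ε j)) = G ε) : walshCoeff S G = 0 := by
  refine Finset.sum_involution (fun ε _ => Function.update ε j (-ε j)) (fun ε _ => ?_)
    (fun ε _ _ h => ?_) (fun _ _ => Finset.mem_univ _) (fun ε _ => ?_)
  · rw [hG, walsh_update_neg hj, Units.neg_smul, add_neg_cancel]
  · exact units_ne_neg_self (ε j) (by simpa using (congrFun h j).symm)
  · simp

lemma sum_walsh_smul_walshCoeff (G : (ι → ℤˣ) → A) (ε : ι → ℤˣ) :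
    ∑ S : Finset ι, walsh S ε • walshCoeff S G = 2 ^ Fintype.card ι • G ε := by
  simp only [walshCoeff, Finset.smul_sum, smul_smul]
  rw [Finset.sum_comm]
  simp only [Units.smul_def, ← Finset.sum_smul, sum_walsh_mul_walsh, ite_smul, zero_smul,
    Finset.sum_ite_eq, Finset.mem_univ, if_true]
  exact_mod_cast natCast_zsmul (G ε) (2 ^ Fintype.card ι)

lemma sum_walshCoeff_walshCoeff (G : (ι → ℤˣ) → (ι → ℤˣ) → A) :
    ∑ S : Finset ι, walshCoeff S (fun ε => walshCoeff S fun η => G ε η) =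
      2 ^ Fintype.card ι • ∑ ε, G ε ε := by
  simp only [walshCoeff]
  rw [Finset.sum_comm, Finset.smul_sum]
  exact Finset.sum_congr rfl fun ε _ => sum_walsh_smul_walshCoeff (G ε) ε

lemma walshCoeff_prod_one_add (S : Finset ι) (z : ι → R) :
    walshCoeff S (fun ε => ∏ j, (1 + ε j • z j)) = 2 ^ Fintype.card ι * ∏ j ∈ S, z j := by
  have expand (ε : ι → ℤˣ) : walsh S ε • ∏ j, (1 + ε j • z j) =
      ∏ j, (if j ∈ S then ε j else 1) • (1 + ε j • z j) := by
    rw [prod_units_smul, Finset.prod_ite_mem, Finset.univ_inter, walsh]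
  have sum_sign (j : ι) : ∑ u : ℤˣ, (if j ∈ S then u else 1) • (1 + u • z j) =
      2 * if j ∈ S then z j else 1 := by
    split_ifs <;> simp [UnitsInt.univ, Units.smul_def] <;> ring
  simp only [walshCoeff, expand]
  rw [← Fintype.piFinset_univ, ← Finset.prod_univ_sum (fun _ => Finset.univ)
    fun j (u : ℤˣ) => (if j ∈ S then u else 1) • (1 + u • z j)]
  simp only [sum_sign, Finset.prod_mul_distrib, Finset.prod_const, Finset.card_univ,
    Finset.prod_ite_mem, Finset.univ_inter]

lemma walshCoeff_multilinear_eq_zero {κ : Type*} [Fintype κ]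
    (M : MultilinearMap ℤ (fun _ : κ => A) B) (e : ι → A) {S : Finset ι}
    (hS : Fintype.card κ < S.card) :
    walshCoeff S (fun ε => M fun _ => ∑ j, ε j • e j) = 0 := by
  classical
  simp only [map_sum_units_smul, walshCoeff, Finset.smul_sum]
  rw [Finset.sum_comm]
  refine Finset.sum_eq_zero fun i _ => ?_
  obtain ⟨j, hjS, hj⟩ : ∃ j ∈ S, j ∉ Finset.univ.image i :=
    Finset.exists_mem_notMem_of_card_lt_card (Finset.card_image_le.trans_lt hS)
  refine walshCoeff_eq_zero_of_update_neg hjS (G := fun ε => (∏ l, ε (i l)) • M fun l => e (i l))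
    fun ε => ?_
  congr! 2 with l
  exact Function.update_of_ne (by rintro rfl; simp at hj) _ _

end Walsh

section RieszProduct

lemma norm_prod_sub_prod_le {ι 𝕜 : Type*} [NormedField 𝕜] (S : Finset ι) {x y : ι → 𝕜}
    (hx : ∀ j, 1 ≤ ‖x j‖) (hy : ∀ j, 1 ≤ ‖y j‖) :
    ‖∏ j ∈ S, x j - ∏ j ∈ S, y j‖ ≤
      (∑ j ∈ S, ‖x j - y j‖) * (‖∏ j ∈ S, x j‖ * ‖∏ j ∈ S, y j‖) := by
  classical
  induction S using Finset.induction_on with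
  | empty => simp
  | insert i S hi ih =>
    simp only [Finset.prod_insert hi, Finset.sum_insert hi]
    set X := ∏ j ∈ S, x j
    set Y := ∏ j ∈ S, y j
    set D := ∑ j ∈ S, ‖x j - y j‖
    have hY : 1 ≤ ‖Y‖ := by
      rw [norm_prod]; exact Finset.one_le_prod fun j _ => hy j
    have hyY : 1 ≤ ‖y i‖ * ‖Y‖ := one_le_mul_of_one_le_of_one_le (hy i) hY
    have : 0 ≤ D := Finset.sum_nonneg fun _ _ => norm_nonneg _
    calc ‖x i * X - y i * Y‖ = ‖(x i - y i) * X + y i * (X - Y)‖ := by ring_nf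
      _ ≤ ‖x i - y i‖ * ‖X‖ + ‖y i‖ * ‖X - Y‖ := by
        simpa only [norm_mul] using norm_add_le ((x i - y i) * X) (y i * (X - Y))
      _ ≤ ‖x i - y i‖ * ‖X‖ * (‖x i‖ * (‖y i‖ * ‖Y‖)) +
          ‖y i‖ * (D * (‖X‖ * ‖Y‖)) * ‖x i‖ := by
        refine add_le_add (le_mul_of_one_le_right (by positivity)
          (one_le_mul_of_one_le_of_one_le (hx i) hyY)) ?_
        exact (mul_le_mul_of_nonneg_left ih (norm_nonneg _)).trans
          (le_mul_of_one_le_right (by positivity) (hx i))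
      _ = (‖x i - y i‖ + D) * (‖x i * X‖ * ‖y i * Y‖) := by simp only [norm_mul]; ring

variable {ι : Type*} [Fintype ι]

/-- The Riesz product `∏ⱼ (1 + i aⱼ)`. Its imaginary coefficients keep it bounded in terms of the
Euclidean norm of `a` alone, independently of the number of factors. -/
def rieszProduct (a : ι → ℝ) : ℂ := ∏ j, (1 + a j • Complex.I)

lemma normSq_one_add_smul_I (t : ℝ) : Complex.normSq (1 + t • Complex.I) = 1 + t ^ 2 := by
  simp [Complex.normSq_apply, sq]

lemma one_le_norm_one_add_smul_I (t : ℝ) : 1 ≤ ‖1 + t • Complex.I‖ := by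
  rw [← one_le_sq_iff₀ (norm_nonneg _), Complex.sq_norm, normSq_one_add_smul_I]
  exact le_add_of_nonneg_right (sq_nonneg t)

lemma norm_rieszProduct_le (a : ι → ℝ) : ‖rieszProduct a‖ ≤ exp ((∑ j, a j ^ 2) / 2) := by
  rw [← sq_le_sq₀ (norm_nonneg _) (exp_nonneg _), Complex.sq_norm, rieszProduct, map_prod,
    ← exp_nat_mul, Nat.cast_ofNat, mul_div_cancel₀ _ two_ne_zero]
  simpa only [normSq_one_add_smul_I] using
    prod_one_add_le_exp_sum Finset.univ fun j => sq_nonneg (a j)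

lemma norm_rieszProduct_sub_le {a b : ι → ℝ} {c : ℝ} (ha : ∑ j, a j ^ 2 ≤ c)
    (hb : ∑ j, b j ^ 2 ≤ c) :
    ‖rieszProduct a - rieszProduct b‖ ≤ exp c * ∑ j, |a j - b j| := by
  have norm_le {v : ι → ℝ} (hv : ∑ j, v j ^ 2 ≤ c) : ‖rieszProduct v‖ ≤ exp (c / 2) :=
    (norm_rieszProduct_le v).trans (by gcongr)
  have factor_sub (j : ι) :
      ‖(1 + a j • Complex.I) - (1 + b j • Complex.I)‖ = |a j - b j| := by
    rw [add_sub_add_left_eq_sub, ← sub_smul, norm_smul, Complex.norm_I, mul_one, norm_eq_abs]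
  calc ‖rieszProduct a - rieszProduct b‖
      ≤ (∑ j, |a j - b j|) * (‖rieszProduct a‖ * ‖rieszProduct b‖) := by
        simpa only [rieszProduct, factor_sub] using norm_prod_sub_prod_le Finset.univ
          (fun j => one_le_norm_one_add_smul_I (a j)) fun j => one_le_norm_one_add_smul_I (b j)
    _ ≤ (∑ j, |a j - b j|) * (exp (c / 2) * exp (c / 2)) := by
        gcongr
        exacts [norm_le ha, norm_le hb]
    _ = exp c * ∑ j, |a j - b j| := by rw [← exp_add, add_halves, mul_comm]

lemma walshCoeff_rieszProduct [DecidableEq ι] (S : Finset ι) (a : ι → ℝ) :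
    walshCoeff S (fun ε => rieszProduct fun j => ε j • a j) =
      (2 ^ Fintype.card ι * ∏ j ∈ S, a j : ℝ) * Complex.I ^ S.card := by
  simp only [rieszProduct, smul_assoc, walshCoeff_prod_one_add, Complex.real_smul,
    Finset.prod_mul_distrib, Finset.prod_const, Complex.ofReal_mul, Complex.ofReal_pow,
    Complex.ofReal_ofNat, Complex.ofReal_prod, mul_assoc]

lemma norm_fwdDiff_iter_le {M E : Type*} [AddCommMonoid M] [SeminormedAddCommGroup E] {f : M → E}
    {h y : M} {n : ℕ} {B : ℝ} (hB : ∀ r ≤ n, ‖f (y + r • h)‖ ≤ B) :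
    ‖(fwdDiff h)^[n] f y‖ ≤ 2 ^ n * B := by
  rw [fwdDiff_iter_eq_sum_shift]
  calc ‖∑ r ∈ Finset.range (n + 1), ((-1 : ℤ) ^ (n - r) * n.choose r) • f (y + r • h)‖
      ≤ ∑ r ∈ Finset.range (n + 1), (n.choose r : ℝ) * B := by
        refine norm_sum_le_of_le _ fun r hr => (norm_zsmul_le _ _).trans ?_
        have abs_coeff : ‖((-1 : ℤ) ^ (n - r) * n.choose r)‖ = n.choose r := by simp
        rw [abs_coeff]
        gcongr
        exact hB r (Finset.mem_range_succ_iff.mp hr)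
    _ = 2 ^ n * B := by
        rw [← Finset.sum_mul]
        exact_mod_cast congrArg (fun m : ℕ => (m : ℝ) * B) (Nat.sum_range_choose n)

/-- The functional `g ↦ Re (i⁻ᵏ Δᵏg(0))`, where `Δ` is the forward difference with step `1`. It
annihilates polynomials of degree below `k`. -/
def fwdDiffRe (k : ℕ) : (ℝ → ℂ) →+ ℝ :=
  AddMonoidHom.mk' (fun g => ((-Complex.I) ^ k * (fwdDiff 1)^[k] g 0).re) fun f g => by
    rw [fwdDiff_iter_add, Pi.add_apply, mul_add, Complex.add_re]

lemma abs_fwdDiffRe_le {k : ℕ} {g : ℝ → ℂ} {B : ℝ} (hB : ∀ r : ℕ, r ≤ k → ‖g r‖ ≤ B) :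
    |fwdDiffRe k g| ≤ 2 ^ k * B := by
  refine (Complex.abs_re_le_norm _).trans ?_
  rw [norm_mul, norm_pow, norm_neg, Complex.norm_I, one_pow, one_mul]
  exact norm_fwdDiff_iter_le (by simpa using hB)

lemma fwdDiffRe_const_mul_pow {k m : ℕ} (hm : m ≤ k) (c : ℂ) :
    fwdDiffRe k (fun t => c * t ^ m) =
      if m = k then k.factorial * ((-Complex.I) ^ k * c).re else 0 := by
  have complex_diff : (fwdDiff 1)^[k] (fun t : ℝ => c * (t : ℂ) ^ m) 0 =
      c * (fwdDiff 1)^[k] (fun z : ℂ => z ^ m) 0 := by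
    simp [fwdDiff_iter_eq_sum_shift, Finset.mul_sum, mul_left_comm]
  change ((-Complex.I) ^ k * (fwdDiff 1)^[k] (fun t : ℝ => c * (t : ℂ) ^ m) 0).re = _
  rw [complex_diff]
  split_ifs with h
  · subst h
    rw [fwdDiff_iter_eq_factorial, Pi.natCast_apply, ← mul_assoc, mul_comm,
      ← nsmul_eq_mul, Complex.re_nsmul, nsmul_eq_mul]
  · rw [fwdDiff_iter_pow_eq_zero_of_lt (hm.lt_of_ne h)]
    simp

/-- The real part of `i⁻ᵏ ∏ⱼ (1 + i aⱼ)` with its homogeneous components of degree below `k`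
removed and the others multiplied by constants, by taking a difference of order `k` along the ray
spanned by `a`. -/
def rieszTail (k : ℕ) (a : ι → ℝ) : ℝ := fwdDiffRe k fun t => rieszProduct (t • a)

lemma rieszTail_zero {k : ℕ} (hk : k ≠ 0) : rieszTail k (0 : ι → ℝ) = 0 := by
  simpa [rieszTail, rieszProduct, hk.symm] using fwdDiffRe_const_mul_pow (Nat.zero_le k) 1

lemma abs_rieszTail_sub_le {k : ℕ} {a b : ι → ℝ} {c : ℝ} (ha : ∑ j, a j ^ 2 ≤ c)
    (hb : ∑ j, b j ^ 2 ≤ c) :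
    |rieszTail k a - rieszTail k b| ≤ 2 ^ k * (exp (k ^ 2 * c) * (k * ∑ j, |a j - b j|)) := by
  have sum_sq_le {v : ι → ℝ} (hv : ∑ j, v j ^ 2 ≤ c) {r : ℕ} (hr : r ≤ k) :
      ∑ j, ((r : ℝ) • v) j ^ 2 ≤ k ^ 2 * c := by
    simp only [Pi.smul_apply, smul_eq_mul, mul_pow, ← Finset.mul_sum]
    gcongr
  rw [rieszTail, rieszTail, ← map_sub]
  refine abs_fwdDiffRe_le fun r hr =>
    (norm_rieszProduct_sub_le (sum_sq_le ha hr) (sum_sq_le hb hr)).trans ?_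
  simp only [Pi.smul_apply, smul_eq_mul, ← mul_sub, abs_mul, Nat.abs_cast, ← Finset.mul_sum]
  gcongr

lemma walshCoeff_rieszTail [DecidableEq ι] {k : ℕ} {S : Finset ι} (hS : S.card ≤ k) (a : ι → ℝ) :
    walshCoeff S (fun ε => rieszTail k fun j => ε j • a j) =
      if S.card = k then 2 ^ Fintype.card ι * k.factorial * ∏ j ∈ S, a j else 0 := by
  have along_ray (t : ℝ) :
      walshCoeff S (fun ε (t : ℝ) => rieszProduct (t • fun j => ε j • a j)) t =
        (2 ^ Fintype.card ι * ∏ j ∈ S, a j : ℝ) * Complex.I ^ S.card * t ^ S.card := by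
    have smul_eq (ε : ι → ℤˣ) : (t • fun j => ε j • a j) = fun j => ε j • (t • a) j :=
      funext fun j => smul_comm t (ε j) (a j)
    simp only [walshCoeff_apply, smul_eq, walshCoeff_rieszProduct, Pi.smul_apply, smul_eq_mul,
      Finset.prod_mul_distrib, Finset.prod_const]
    push_cast
    ring
  simp only [rieszTail, ← map_walshCoeff, funext along_ray, fwdDiffRe_const_mul_pow hS]
  split_ifs with h
  · have unit_phase : (-Complex.I) ^ k * Complex.I ^ k = 1 := by
      rw [← mul_pow, neg_mul, Complex.I_mul_I, neg_neg, one_pow]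
    rw [h, mul_left_comm, unit_phase, mul_one, Complex.ofReal_re]
    ring
  · rfl

end RieszProduct

section Factorization

lemma exists_leftInverse_of_projection {𝕜 E X : Type*} [NontriviallyNormedField 𝕜]
    [NormedAddCommGroup E] [NormedSpace 𝕜 E] [NormedAddCommGroup X] [NormedSpace 𝕜 X]
    {F : Submodule 𝕜 X} (T : E ≃ₗ[𝕜] F) (hT : ∀ v, ‖v‖ ≤ ‖(T v : X)‖) (P : X →L[𝕜] X)
    (hPF : ∀ x, P x ∈ F) (hP : ∀ y ∈ F, P y = y) :
    ∃ R : X →L[𝕜] E, (∀ v, R (T v) = v) ∧ ‖R‖ ≤ ‖P‖ := by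
  let R : X →ₗ[𝕜] E := T.symm.toLinearMap ∘ₗ (P : X →ₗ[𝕜] X).codRestrict F hPF
  have hTR (x : X) : (T (R x) : X) = P x := by simp [R]
  have hR (x : X) : ‖R x‖ ≤ ‖P‖ * ‖x‖ :=
    (hT (R x)).trans (by rw [hTR]; exact P.le_opNorm x)
  refine ⟨R.mkContinuous ‖P‖ hR, fun v => T.injective (Subtype.ext ?_),
    R.mkContinuous_norm_le (norm_nonneg P) hR⟩
  rw [LinearMap.mkContinuous_apply, hTR, hP _ (T v).2]

variable {ι : Type*} [Fintype ι]

lemma sum_abs_le_sqrt_card_mul_norm (v : EuclideanSpace ℝ ι) :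
    ∑ j, |v j| ≤ √(Fintype.card ι) * ‖v‖ := by
  rw [EuclideanSpace.norm_eq, ← sqrt_mul (Nat.cast_nonneg _)]
  exact le_sqrt_of_sq_le sq_sum_le_card_mul_sum_sq

lemma norm_sum_units_smul_single [DecidableEq ι] (ε : ι → ℤˣ) :
    ‖∑ j, ε j • EuclideanSpace.single j (1 : ℝ)‖ = √(Fintype.card ι) := by
  have coord (i : ι) : ‖(∑ j, ε j • EuclideanSpace.single j (1 : ℝ)) i‖ = 1 := by
    have : (∑ j, ε j • EuclideanSpace.single j (1 : ℝ)) i = ε i • (1 : ℝ) := by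
      simp [Units.smul_def, Pi.single_apply]
    rw [this, norm_units_zsmul, norm_one]
  simp only [EuclideanSpace.norm_eq, coord, one_pow, Finset.sum_const, Finset.card_univ,
    nsmul_eq_mul, mul_one]

end Factorization

section Projection

lemma norm_coe_le_one {X : Type*} [NormedAddCommGroup X] (x : UBall X) : ‖(x : X)‖ ≤ 1 :=
  mem_closedBall_zero_iff.mp x.2

variable {X : Type*} [NormedAddCommGroup X] [NormedSpace ℝ X] {k : ℕ}

/-- `Q` restricts to a projection of `Lip₀(B_X)` onto `P(ᵏX)` of norm at most `K`. The values of `Q`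
outside `Lip₀(B_X)` are irrelevant. -/
structure IsPolynomialProjection (k : ℕ) (Q : (UBall X → ℝ) →ₗ[ℝ] (UBall X → ℝ)) (K : NNReal) :
    Prop where
  mem : ∀ f ∈ Lip0B X, Q f ∈ PhomB k X
  apply_eq : ∀ f ∈ PhomB k X, Q f = f
  lipschitzWith : ∀ f ∈ Lip0B X, ∀ L : NNReal, LipschitzWith L f → LipschitzWith (K * L) (Q f)

lemma IsPolynomialProjection.abs_apply_le {Q : (UBall X → ℝ) →ₗ[ℝ] (UBall X → ℝ)} {K L : NNReal}
    (hQ : IsPolynomialProjection k Q K) (hk : k ≠ 0) {f : UBall X → ℝ} (hf : LipschitzWith L f)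
    (hf0 : f (zeroB X) = 0) (x : UBall X) : |Q f x| ≤ K * L := by
  have hfLip : f ∈ Lip0B X := ⟨⟨L, hf⟩, hf0⟩
  have apply_zero : Q f (zeroB X) = 0 := by
    obtain ⟨M, hM⟩ := hQ.mem f hfLip
    rw [hM]
    exact M.map_coord_zero ⟨0, Nat.pos_of_ne_zero hk⟩ rfl
  calc |Q f x| = dist (Q f x) (Q f (zeroB X)) := by rw [apply_zero, dist_zero_right, norm_eq_abs]
    _ ≤ (K * L : NNReal) * dist x (zeroB X) := (hQ.lipschitzWith f hfLip L hf).dist_le_mul _ _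
    _ ≤ K * L := by
      rw [NNReal.coe_mul]
      refine mul_le_of_le_one_right (by positivity) ?_
      exact (dist_zero_right (x : X)).trans_le (norm_coe_le_one x)

lemma prod_mem_PhomB {ι : Type*} (φ : ι → X →L[ℝ] ℝ) (S : Finset ι) :
    (fun x : UBall X => ∏ j ∈ S, φ j x) ∈ PhomB S.card X := by
  refine ⟨(ContinuousMultilinearMap.mkPiAlgebra ℝ (Fin S.card) ℝ).compContinuousLinearMap
    fun l => φ (S.equivFin.symm l), fun x => ?_⟩
  rw [ContinuousMultilinearMap.compContinuousLinearMap_apply,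
    ContinuousMultilinearMap.mkPiAlgebra_apply,
    Equiv.prod_comp S.equivFin.symm fun j : S => φ j x]
  exact (Finset.prod_coe_sort S fun j => φ j x).symm

variable {ι : Type*} [Fintype ι]

lemma PhomB.walshCoeff_eq_zero [DecidableEq ι] {f : UBall X → ℝ} (hf : f ∈ PhomB k X) {e : ι → X}
    {y : (ι → ℤˣ) → UBall X} (hy : ∀ ε, (y ε : X) = ∑ j, ε j • e j) {S : Finset ι}
    (hS : k < S.card) : walshCoeff S (fun ε => f (y ε)) = 0 := by
  obtain ⟨M, hM⟩ := hf
  simp only [hM, hy]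
  exact walshCoeff_multilinear_eq_zero (M.toMultilinearMap.restrictScalars ℤ) e
    (by rwa [Fintype.card_fin])

/-- The test function on the unit ball of `X` attached to a sign vector `ε`, where `R` provides
Euclidean coordinates on `X`. -/
def rieszTest (k : ℕ) (R : X →L[ℝ] EuclideanSpace ℝ ι) (ε : ι → ℤˣ) (x : UBall X) : ℝ :=
  rieszTail k fun j => ε j • R x j

/-- The dimension-free factor of the Lipschitz constant of `rieszTest k R ε` when `‖R‖ ≤ C`. -/
def rieszConst (k : ℕ) (C : ℝ) : ℝ := 2 ^ k * (exp (k ^ 2 * C ^ 2) * (k * C))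

variable {R : X →L[ℝ] EuclideanSpace ℝ ι}

lemma rieszTest_zeroB (hk : k ≠ 0) (ε : ι → ℤˣ) : rieszTest k R ε (zeroB X) = 0 := by
  have coords_eq_zero : (fun j => ε j • R (zeroB X) j) = 0 := by ext; simp [zeroB]
  rw [rieszTest, coords_eq_zero, rieszTail_zero hk]

lemma lipschitzWith_rieszTest {C : ℝ} (hR : ‖R‖ ≤ C) (ε : ι → ℤˣ) :
    LipschitzWith (√(Fintype.card ι) * rieszConst k C).toNNReal (rieszTest k R ε) := by
  have sum_sq_le (x : UBall X) : ∑ j, (ε j • R x j) ^ 2 ≤ C ^ 2 := by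
    have hRx : ‖R x‖ ≤ C := (R.le_of_opNorm_le_of_le hR (norm_coe_le_one x)).trans_eq (mul_one C)
    calc ∑ j, (ε j • R x j) ^ 2 = ‖R x‖ ^ 2 := by
          simp only [EuclideanSpace.norm_sq_eq, smul_pow, Int.units_sq, one_smul, norm_eq_abs,
            sq_abs]
      _ ≤ C ^ 2 := by gcongr
  refine LipschitzWith.of_dist_le' fun x z => ?_
  have sum_abs_sub_le : ∑ j, |ε j • R x j - ε j • R z j| ≤ √(Fintype.card ι) * (C * dist x z) := by
    calc ∑ j, |ε j • R x j - ε j • R z j| = ∑ j, |(R (x - z)) j| := by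
          simp only [← smul_sub, ← norm_eq_abs, norm_units_zsmul, map_sub, PiLp.sub_apply]
      _ ≤ √(Fintype.card ι) * ‖R (x - z)‖ := sum_abs_le_sqrt_card_mul_norm _
      _ ≤ √(Fintype.card ι) * (C * dist x z) := by
          gcongr
          rw [Subtype.dist_eq, dist_eq_norm]
          exact R.le_of_opNorm_le hR _
  calc dist (rieszTest k R ε x) (rieszTest k R ε z)
      ≤ 2 ^ k * (exp (k ^ 2 * C ^ 2) * (k * ∑ j, |ε j • R x j - ε j • R z j|)) :=
        abs_rieszTail_sub_le (sum_sq_le x) (sum_sq_le z)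
    _ ≤ 2 ^ k * (exp (k ^ 2 * C ^ 2) * (k * (√(Fintype.card ι) * (C * dist x z)))) := by gcongr
    _ = √(Fintype.card ι) * rieszConst k C * dist x z := by rw [rieszConst]; ring

section Averaging

variable [DecidableEq ι]

lemma walshCoeff_rieszTest {S : Finset ι} (hS : S.card ≤ k) :
    walshCoeff S (rieszTest k R) = if S.card = k then
      (2 ^ Fintype.card ι * k.factorial : ℝ) • fun x : UBall X => ∏ j ∈ S, R x j else 0 := by
  ext x
  rw [walshCoeff_apply]
  refine (walshCoeff_rieszTail hS fun j => R x j).trans ?_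
  split_ifs <;> rfl

variable {Q : (UBall X → ℝ) →ₗ[ℝ] (UBall X → ℝ)} {K : NNReal} {C s : ℝ} {e : ι → X}
  {y : (ι → ℤˣ) → UBall X}

lemma IsPolynomialProjection.apply_walshCoeff_rieszTest (hQ : IsPolynomialProjection k Q K)
    {S : Finset ι} (hS : S.card ≤ k) :
    Q (walshCoeff S (rieszTest k R)) = walshCoeff S (rieszTest k R) := by
  rw [walshCoeff_rieszTest hS]
  split_ifs with h
  · rw [map_smul, hQ.apply_eq]
    exact h ▸ prod_mem_PhomB (fun j => EuclideanSpace.proj j ∘L R) S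
  · exact map_zero Q

lemma prod_apply_units_smul_sum (he : ∀ j, R (e j) = s • EuclideanSpace.single j 1)
    (ε : ι → ℤˣ) (S : Finset ι) :
    ∏ j ∈ S, R (∑ i, ε i • e i) j = walsh S ε • s ^ S.card := by
  have coord (j : ι) : R (∑ i, ε i • e i) j = ε j • s := by
    simp [Units.smul_def, he, Pi.single_apply, mul_comm]
  simp only [coord, prod_units_smul, Finset.prod_const, walsh]

lemma IsPolynomialProjection.walshCoeff_walshCoeff (hQ : IsPolynomialProjection k Q K) (hk : k ≠ 0)
    (hR : ‖R‖ ≤ C) (he : ∀ j, R (e j) = s • EuclideanSpace.single j 1)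
    (hy : ∀ ε, (y ε : X) = ∑ j, ε j • e j) (S : Finset ι) :
    walshCoeff S (fun ε => walshCoeff S fun η => Q (rieszTest k R ε) (y η)) =
      if S.card = k then
        2 ^ Fintype.card ι * (2 ^ Fintype.card ι * k.factorial * s ^ k)
      else 0 := by
  obtain hSk | hSk := lt_or_ge k S.card
  · have inner_eq_zero (ε : ι → ℤˣ) : walshCoeff S (fun η => Q (rieszTest k R ε) (y η)) = 0 :=
      PhomB.walshCoeff_eq_zero (hQ.mem _ ⟨⟨_, lipschitzWith_rieszTest hR ε⟩, rieszTest_zeroB hk ε⟩)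
        hy hSk
    rw [if_neg hSk.ne', funext inner_eq_zero]
    simp only [walshCoeff, smul_zero, Finset.sum_const_zero]
  · have inner_eq (η : ι → ℤˣ) : walshCoeff S (fun ε => Q (rieszTest k R ε) (y η)) =
        walshCoeff S (rieszTest k R) (y η) := by
      rw [← hQ.apply_walshCoeff_rieszTest hSk, ← walshCoeff_apply]
      exact congrFun (map_walshCoeff Q.toAddMonoidHom S _).symm (y η)
    rw [walshCoeff_comm]
    simp only [inner_eq, walshCoeff_rieszTest hSk]
    split_ifs with h
    · simp only [Pi.smul_apply, hy, prod_apply_units_smul_sum he, h, smul_comm _ (walsh S _),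
        walshCoeff_walsh_smul, smul_eq_mul, nsmul_eq_mul, Nat.cast_pow, Nat.cast_ofNat]
    · simp only [walshCoeff, Pi.zero_apply, smul_zero, Finset.sum_const_zero]

lemma IsPolynomialProjection.sum_apply_rieszTest (hQ : IsPolynomialProjection k Q K) (hk : k ≠ 0)
    (hR : ‖R‖ ≤ C) (he : ∀ j, R (e j) = s • EuclideanSpace.single j 1)
    (hy : ∀ ε, (y ε : X) = ∑ j, ε j • e j) :
    ∑ ε, Q (rieszTest k R ε) (y ε) =
      2 ^ Fintype.card ι * ((Fintype.card ι).descFactorial k * s ^ k) := by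
  have trace := sum_walshCoeff_walshCoeff fun ε η => Q (rieszTest k R ε) (y η)
  simp only [hQ.walshCoeff_walshCoeff hk hR he hy] at trace
  rw [← Finset.sum_filter, Finset.sum_const, Finset.univ_filter_card_eq, Finset.card_powersetCard,
    Finset.card_univ, nsmul_eq_mul, nsmul_eq_mul, Nat.cast_pow, Nat.cast_ofNat] at trace
  refine mul_left_cancel₀ (pow_ne_zero (Fintype.card ι) (two_ne_zero (α := ℝ))) ?_
  rw [← trace, Nat.descFactorial_eq_factorial_mul_choose, Nat.cast_mul]
  ring

lemma IsPolynomialProjection.descFactorial_mul_pow_le (hQ : IsPolynomialProjection k Q K)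
    (hk : k ≠ 0) (hR : ‖R‖ ≤ C) (he : ∀ j, R (e j) = s • EuclideanSpace.single j 1)
    (he1 : ∀ ε : ι → ℤˣ, ‖∑ j, ε j • e j‖ ≤ 1) :
    (Fintype.card ι).descFactorial k * s ^ k ≤ K * (√(Fintype.card ι) * rieszConst k C) := by
  have hC : 0 ≤ C := (norm_nonneg R).trans hR
  have hconst : 0 ≤ √(Fintype.card ι) * rieszConst k C := by unfold rieszConst; positivity
  let y (ε : ι → ℤˣ) : UBall X := ⟨∑ j, ε j • e j, mem_closedBall_zero_iff.mpr (he1 ε)⟩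
  have apply_le (ε : ι → ℤˣ) :
      Q (rieszTest k R ε) (y ε) ≤ K * (√(Fintype.card ι) * rieszConst k C) := by
    rw [← coe_toNNReal _ hconst]
    exact (le_abs_self _).trans
      (hQ.abs_apply_le hk (lipschitzWith_rieszTest hR ε) (rieszTest_zeroB hk ε) (y ε))
  have average := Finset.sum_le_card_nsmul Finset.univ _ _ fun ε _ => apply_le ε
  rw [hQ.sum_apply_rieszTest hk hR he fun ε => rfl, Finset.card_univ, Fintype.card_fun,
    Fintype.card_units_int, nsmul_eq_mul, Nat.cast_pow, Nat.cast_ofNat] at average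
  exact le_of_mul_le_mul_left average (by positivity)

end Averaging

lemma IsPolynomialProjection.descFactorial_mul_pow_le_of_leftInverse
    {Q : (UBall X → ℝ) →ₗ[ℝ] (UBall X → ℝ)} {K : NNReal} {C : ℝ}
    (hQ : IsPolynomialProjection k Q K) (hk : k ≠ 0) (hR : ‖R‖ ≤ C)
    {T : EuclideanSpace ℝ ι →ₗ[ℝ] X} (hT : ∀ v, ‖T v‖ ≤ C * ‖v‖) (hRT : ∀ v, R (T v) = v) :
    (Fintype.card ι).descFactorial k * (C * √(Fintype.card ι))⁻¹ ^ k ≤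
      K * (√(Fintype.card ι) * rieszConst k C) := by
  classical
  have hC : 0 ≤ C := (norm_nonneg R).trans hR
  set s := (C * √(Fintype.card ι))⁻¹
  refine hQ.descFactorial_mul_pow_le hk hR (e := fun j => s • T (EuclideanSpace.single j 1))
    (fun j => by rw [map_smul, hRT]) fun ε => ?_
  have sum_eq : ∑ j, ε j • s • T (EuclideanSpace.single j 1) =
      s • T (∑ j, ε j • EuclideanSpace.single j 1) := by
    simp only [map_sum, Finset.smul_sum, Units.smul_def, map_zsmul, smul_comm s]
  calc ‖∑ j, ε j • s • T (EuclideanSpace.single j 1)‖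
      = s * ‖T (∑ j, ε j • EuclideanSpace.single j 1)‖ := by
        rw [sum_eq, norm_smul_of_nonneg (by positivity)]
    _ ≤ s * (C * √(Fintype.card ι)) := by
        gcongr
        exact (hT _).trans_eq (by rw [norm_sum_units_smul_single])
    _ ≤ 1 := inv_mul_le_one

end Projection

section Growth

lemma half_pow_le_descFactorial {n k : ℕ} (h : 2 * k ≤ n) :
    (n / 2 : ℝ) ^ k ≤ n.descFactorial k := by
  have half_le : (n / 2 : ℝ) ≤ ((n + 1 - k : ℕ) : ℝ) := by
    rw [div_le_iff₀ two_pos]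
    exact_mod_cast (by omega : n ≤ (n + 1 - k) * 2)
  calc (n / 2 : ℝ) ^ k ≤ ((n + 1 - k : ℕ) : ℝ) ^ k := by gcongr
    _ ≤ n.descFactorial k := mod_cast Nat.pow_sub_le_descFactorial n k

lemma exists_mul_sqrt_lt_descFactorial_mul_pow {k : ℕ} (hk : 2 ≤ k) {C : ℝ} (hC : 0 < C) (B : ℝ) :
    ∃ n : ℕ, B * √n < n.descFactorial k * (C * √n)⁻¹ ^ k := by
  obtain ⟨m₀, hm₀⟩ := exists_nat_gt (B * (2 * C) ^ k)
  set m := m₀ + 2 * k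
  have hm : 0 < (m : ℝ) := by positivity
  have hBm : B < m / (2 * C) ^ k := by
    rw [lt_div_iff₀ (by positivity)]
    exact hm₀.trans_le (mod_cast Nat.le_add_right m₀ (2 * k))
  have two_mul_le : 2 * k ≤ m ^ 2 :=
    (Nat.le_add_left _ m₀).trans (Nat.le_self_pow two_ne_zero m)
  have one_le : (1 : ℝ) ≤ m := Nat.one_le_cast.mpr (by omega)
  refine ⟨m ^ 2, ?_⟩
  rw [Nat.cast_pow, sqrt_sq hm.le]
  calc B * m < m / (2 * C) ^ k * m := by gcongr
    _ = m ^ 2 / (2 * C) ^ k := by ring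
    _ ≤ m ^ k / (2 * C) ^ k := by gcongr
    _ = (m ^ 2 / 2) ^ k * (C * m)⁻¹ ^ k := by rw [← mul_pow, ← div_pow]; congr 1; field_simp
    _ ≤ (m ^ 2).descFactorial k * (C * m)⁻¹ ^ k := by
        gcongr
        exact_mod_cast half_pow_le_descFactorial two_mul_le

end Growth

theorem statement5_general (X : Type*) [NormedAddCommGroup X] [NormedSpace ℝ X] (C : ℝ)
    (hunif : ∀ n : ℕ, ∃ F : Submodule ℝ X,
      (∃ T : EuclideanSpace ℝ (Fin n) ≃ₗ[ℝ] F,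
        ∀ v : EuclideanSpace ℝ (Fin n), ‖v‖ ≤ ‖(T v : X)‖ ∧ ‖(T v : X)‖ ≤ C * ‖v‖) ∧
      (∃ P : X →L[ℝ] X, (∀ x : X, P x ∈ F) ∧ (∀ y ∈ F, P y = y) ∧ ‖P‖ ≤ C))
    (k : ℕ) (hk : 2 ≤ k) :
    ¬ ∃ (Q : (↥(UBall X) → ℝ) →ₗ[ℝ] (↥(UBall X) → ℝ)) (K : NNReal),
      (∀ f ∈ Lip0B X, Q f ∈ PhomB k X) ∧ (∀ f ∈ PhomB k X, Q f = f) ∧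
      (∀ f ∈ Lip0B X, ∀ L : NNReal, LipschitzWith L f → LipschitzWith (K * L) (Q f)) := by
  rintro ⟨Q, K, mem, apply_eq, lipschitzWith⟩
  have hQ : IsPolynomialProjection k Q K := ⟨mem, apply_eq, lipschitzWith⟩
  have hC : 0 < C := by
    obtain ⟨_, ⟨T, hT⟩, -⟩ := hunif 1
    have one_le := (hT (EuclideanSpace.single 0 1)).1.trans (hT (EuclideanSpace.single 0 1)).2
    rw [PiLp.norm_single, norm_one, mul_one] at one_le
    exact zero_lt_one.trans_le one_le
  obtain ⟨n, hn⟩ := exists_mul_sqrt_lt_descFactorial_mul_pow hk hC (K * rieszConst k C)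
  obtain ⟨F, ⟨T, hT⟩, P, hPF, hP, hPC⟩ := hunif n
  obtain ⟨R, hRT, hRP⟩ := exists_leftInverse_of_projection T (fun v => (hT v).1) P hPF hP
  have bound := hQ.descFactorial_mul_pow_le_of_leftInverse (two_pos.trans_le hk).ne'
    (hRP.trans hPC) (T := F.subtype ∘ₗ T.toLinearMap) (fun v => (hT v).2) hRT
  rw [Fintype.card_fin] at bound
  exact hn.not_ge (bound.trans_eq (by ring))

/-- **Theorem 4.3 (homogeneous case).** If an infinite-dimensional Banach space `X`
contains uniformly complemented `ℓ₂ⁿ`'s, then for every `k ≥ 2` the space `P(ᵏX)` of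
`k`-homogeneous polynomials is not complemented in `Lip₀(B_X)`. -/
theorem statement5 (X : Type*) [NormedAddCommGroup X] [NormedSpace ℝ X] [CompleteSpace X]
    (hinf : ¬ FiniteDimensional ℝ X)
    (C : ℝ) (hC : 1 ≤ C)
    (hunif : ∀ n : ℕ, ∃ F : Submodule ℝ X,
      (∃ T : EuclideanSpace ℝ (Fin n) ≃ₗ[ℝ] F,
        ∀ v : EuclideanSpace ℝ (Fin n), ‖v‖ ≤ ‖(T v : X)‖ ∧ ‖(T v : X)‖ ≤ C * ‖v‖) ∧
      (∃ P : X →L[ℝ] X, (∀ x : X, P x ∈ F) ∧ (∀ y ∈ F, P y = y) ∧ ‖P‖ ≤ C))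
    (k : ℕ) (hk : 2 ≤ k) :
    ¬ ∃ (Q : (↥(UBall X) → ℝ) →ₗ[ℝ] (↥(UBall X) → ℝ)) (K : NNReal),
      (∀ f ∈ Lip0B X, Q f ∈ PhomB k X) ∧ (∀ f ∈ PhomB k X, Q f = f) ∧
      (∀ f ∈ Lip0B X, ∀ L : NNReal, LipschitzWith L f → LipschitzWith (K * L) (Q f)) :=
  statement5_general X C hunif k hk
end
end

section
/- Let X be a Banach space, n ≥ 1, and P ∈ P(ⁿX) an n-homogeneous polynomial on X. Let P̌ be the unique symmetric bounded n-linear form on X with P(x) = P̌(x,…,x) for all x. Then n·‖P‖_P ≤ Lip(P↾_{B_X}) ≤ n·‖P̌‖_L, where Lip(P↾_{B_X}) denotes the best Lipschitz constant of the restriction of P to the closed unit ball B_X. -/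
/-!
Along the radius through `x` the polynomial is `t ↦ t ^ n • M (x, …, x)`, whose derivative at
`t = 1` is `n • M (x, …, x)`; a Lipschitz constant bounds this derivative, which is one-sided from
inside the ball when `‖x‖ = 1`. For the upper bound, `M (x, …, x) - M (y, …, y)` telescopes into
`n` terms, each with one entry `x - y` and all other entries in the ball.
-/

open Metric Set Real

noncomputable section

open Filter Topology
open scoped NNReal

theorem norm_slope_le_of_lipschitzOnWith {𝕜 F : Type*} [NormedField 𝕜] [SeminormedAddCommGroup F]
    [NormedSpace 𝕜 F] {f : 𝕜 → F} {s : Set 𝕜} {K : ℝ≥0} (hf : LipschitzOnWith K f s) {a b : 𝕜}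
    (ha : a ∈ s) (hb : b ∈ s) : ‖slope f a b‖ ≤ K := by
  rw [slope_def_module, norm_smul, norm_inv, inv_mul_eq_div]
  exact div_le_of_le_mul₀ (norm_nonneg _) K.2 (hf.norm_sub_le hb ha)

theorem norm_le_of_hasDerivWithinAt_of_lipschitzOnWith {𝕜 F : Type*} [NontriviallyNormedField 𝕜]
    [NormedAddCommGroup F] [NormedSpace 𝕜 F] {f : 𝕜 → F} {f' : F} {s : Set 𝕜} {a : 𝕜} {K : ℝ≥0}
    (ha : a ∈ s) (hs : UniqueDiffWithinAt 𝕜 s a) (hf' : HasDerivWithinAt f f' s a)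
    (hf : LipschitzOnWith K f s) : ‖f'‖ ≤ K := by
  have : (𝓝[s \ {a}] a).NeBot := accPt_principal_iff_nhdsWithin.1 hs.accPt
  refine le_of_tendsto (hasDerivWithinAt_iff_tendsto_slope.1 hf').norm ?_
  filter_upwards [self_mem_nhdsWithin] with b hb
  exact norm_slope_le_of_lipschitzOnWith hf ha hb.1

theorem lipschitzOnWith_comp_smul_Icc {E α : Type*} [SeminormedAddCommGroup E] [NormedSpace ℝ E]
    [PseudoEMetricSpace α] {f : E → α} {s : Set E} {K : ℝ≥0} (hf : LipschitzOnWith K f s)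
    (hs : StarConvex ℝ 0 s) {x : E} (hx : x ∈ s) :
    LipschitzOnWith (K * ‖x‖₊) (fun t : ℝ ↦ f (t • x)) (Icc 0 1) := by
  have h_smul : LipschitzWith ‖x‖₊ fun t : ℝ ↦ t • x :=
    .of_dist_le_mul fun t u ↦ by simp [dist_eq_norm, ← sub_smul, norm_smul, mul_comm]
  exact hf.comp h_smul.lipschitzOnWith fun t ht ↦ hs.smul_mem hx ht.1 ht.2

theorem abs_mul_norm_le_of_homogeneous_of_lipschitzOnWith {E F : Type*} [SeminormedAddCommGroup E]
    [NormedSpace ℝ E] [NormedAddCommGroup F] [NormedSpace ℝ F] {f : E → F} {s : Set E} {K : ℝ≥0}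
    {p : ℝ} {x : E} (hf : LipschitzOnWith K f s) (hs : StarConvex ℝ 0 s) (hx : x ∈ s)
    (hfx : ∀ t ∈ Ioc (0 : ℝ) 1, f (t • x) = t ^ p • f x) : |p| * ‖f x‖ ≤ K * ‖x‖ := by
  have h_deriv : HasDerivWithinAt (fun t : ℝ ↦ f (t • x)) (p • f x) (Ioc 0 1) 1 := by
    have h_pow : HasDerivAt (fun t : ℝ ↦ t ^ p) p 1 := by
      simpa using hasDerivAt_rpow_const (x := 1) (p := p) (.inl one_ne_zero)
    exact (h_pow.smul_const (f x)).hasDerivWithinAt.congr_of_mem hfx (by simp)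
  have h_mem : (1 : ℝ) ∈ Ioc 0 1 := right_mem_Ioc.2 one_pos
  simpa [norm_smul] using norm_le_of_hasDerivWithinAt_of_lipschitzOnWith h_mem
    (uniqueDiffOn_Ioc 0 1 1 h_mem) h_deriv
    ((lipschitzOnWith_comp_smul_Icc hf hs hx).mono Ioc_subset_Icc_self)

theorem card_mul_norm_apply_const_le_of_lipschitzOnWith {ι E F : Type*} [Fintype ι]
    [SeminormedAddCommGroup E] [NormedSpace ℝ E] [NormedAddCommGroup F] [NormedSpace ℝ F]
    (M : MultilinearMap ℝ (fun _ : ι ↦ E) F) {s : Set E} {K : ℝ≥0}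
    (hM : LipschitzOnWith K (fun x ↦ M fun _ ↦ x) s) (hs : StarConvex ℝ 0 s) {x : E}
    (hx : x ∈ s) : Fintype.card ι * ‖M fun _ ↦ x‖ ≤ K * ‖x‖ := by
  have h_homogeneous (t : ℝ) :
      (M fun _ ↦ t • x) = t ^ (Fintype.card ι : ℝ) • M fun _ ↦ x := by
    simpa using M.map_smul_univ (fun _ ↦ t) fun _ ↦ x
  simpa using abs_mul_norm_le_of_homogeneous_of_lipschitzOnWith hM hs hx fun t _ ↦ h_homogeneous t

theorem lipschitzOnWith_apply_const {𝕜 ι E F : Type*} [NontriviallyNormedField 𝕜] [Fintype ι]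
    [SeminormedAddCommGroup E] [NormedSpace 𝕜 E] [SeminormedAddCommGroup F] [NormedSpace 𝕜 F]
    (M : ContinuousMultilinearMap 𝕜 (fun _ : ι ↦ E) F) (r : ℝ≥0) :
    LipschitzOnWith (‖M‖₊ * Fintype.card ι * r ^ (Fintype.card ι - 1)) (fun x ↦ M fun _ ↦ x)
      (closedBall 0 r) := by
  have norm_const_le {z : E} (hz : z ∈ closedBall 0 (r : ℝ)) : ‖fun _ : ι ↦ z‖ ≤ r :=
    (pi_norm_const_le z).trans (mem_closedBall_zero_iff.1 hz)
  refine .of_dist_le_mul fun x hx y hy ↦ ?_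
  rw [dist_eq_norm, dist_eq_norm]
  push_cast
  refine (M.norm_image_sub_le (fun _ ↦ x) fun _ ↦ y).trans ?_
  gcongr
  · exact max_le (norm_const_le hx) (norm_const_le hy)
  · exact pi_norm_const_le (x - y)

theorem statement9_general {𝕜 ι X Y : Type*} [RCLike 𝕜] [Fintype ι] [SeminormedAddCommGroup X]
    [NormedSpace 𝕜 X] [NormedAddCommGroup Y] [NormedSpace 𝕜 Y]
    (M : ContinuousMultilinearMap 𝕜 (fun _ : ι ↦ X) Y) :
    (∀ K : ℝ≥0, LipschitzOnWith K (fun x ↦ M fun _ ↦ x) (closedBall 0 1) →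
      ∀ x ∈ closedBall (0 : X) 1, Fintype.card ι * ‖M fun _ ↦ x‖ ≤ K) ∧
    LipschitzOnWith (Fintype.card ι * ‖M‖₊) (fun x ↦ M fun _ ↦ x) (closedBall 0 1) := by
  let : NormedSpace ℝ X := .restrictScalars ℝ 𝕜 X
  let : NormedSpace ℝ Y := .restrictScalars ℝ 𝕜 Y
  have : IsScalarTower ℝ 𝕜 X := .restrictScalars ℝ 𝕜 X
  have : IsScalarTower ℝ 𝕜 Y := .restrictScalars ℝ 𝕜 Y
  constructor
  · intro K hK x hx
    have h_star : StarConvex ℝ 0 (closedBall (0 : X) 1) :=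
      (convex_closedBall 0 1).starConvex (mem_closedBall_self zero_le_one)
    calc Fintype.card ι * ‖M fun _ ↦ x‖
        ≤ K * ‖x‖ := card_mul_norm_apply_const_le_of_lipschitzOnWith
          (M.toMultilinearMap.restrictScalars ℝ) hK h_star hx
      _ ≤ K := mul_le_of_le_one_right K.2 (mem_closedBall_zero_iff.1 hx)
  · simpa [mul_comm] using lipschitzOnWith_apply_const M 1

/-- **Fact 2.1.** Let `P` be the `n`-homogeneous polynomial on a Banach space `X`
associated with its (unique) symmetric bounded `n`-linear form `M = P̌`, that is,
`P x = M(x,…,x)`. Then `n·‖P‖_P ≤ Lip(P↾_{B_X}) ≤ n·‖M‖_L`: every Lipschitz constant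
`K` of `P` on the closed unit ball satisfies `n·|P x| ≤ K` for all `x` in the ball
(equivalently `n·‖P‖_P ≤ K`), and `P` is Lipschitz on the closed unit ball with
constant `n·‖M‖`. -/
theorem statement9 (X : Type*) [NormedAddCommGroup X] [NormedSpace ℝ X]
    (n : ℕ) (hn : 1 ≤ n)
    (M : ContinuousMultilinearMap ℝ (fun _ : Fin n => X) ℝ)
    (hsymm : ∀ (σ : Equiv.Perm (Fin n)) (v : Fin n → X), M (v ∘ σ) = M v) :
    (∀ K : NNReal,
      LipschitzOnWith K (fun x : X => M (fun _ => x)) (Metric.closedBall (0 : X) 1) →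
      ∀ x ∈ Metric.closedBall (0 : X) 1, (n : ℝ) * |M (fun _ => x)| ≤ (K : ℝ)) ∧
    LipschitzOnWith ((n : NNReal) * ‖M‖₊)
      (fun x : X => M (fun _ => x)) (Metric.closedBall (0 : X) 1) := by
  simpa using statement9_general M
end
end
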